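/- There exist universal constants c, c' > 0 such that for every real p ≥ 1, every real α > 2, and every finite metric space (X,d) with n ≥ 2 points, there exist a real ψ with 0 < ψ ≤ 1 and ψ ≥ 1 − c·log α/α, a subset Y ⊆ X with |Y| ≥ n^ψ, and an α-embedding of Y into ℝ^D equipped with the ℓ_p norm, where D = ⌈⌈c'/(α−2)²⌉·ψ·log n⌉. -/

import Mathlib

open Finset in
lemma rld_ball (D : ℕ) (x : Fin D → Fin 64) :
    (univ.filter (fun y : Fin D → Fin 64 => 2 * (univ.filter (fun i => x i ≠ y i)).card < D)).card
      ≤ 16 ^ D := by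
  have h1 : ∑ y : Fin D → Fin 64, ∏ i, (if x i = y i then 64 else 1 : ℕ) = 127 ^ D := by
    have := (Finset.prod_univ_sum (fun _ : Fin D => (univ : Finset (Fin 64)))
      (fun i a => (if x i = a then 64 else 1 : ℕ)))
    rw [Fintype.piFinset_univ] at this
    rw [← this]
    have h2 : ∀ i : Fin D, ∑ a : Fin 64, (if x i = a then 64 else 1 : ℕ) = 127 := by
      intro i
      generalize x i = b
      revert b
      decide
    simp [h2]
  have h2 : ∀ y : Fin D → Fin 64, 2 * (univ.filter (fun i => x i ≠ y i)).card < D →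
      8 ^ D ≤ ∏ i, (if x i = y i then 64 else 1 : ℕ) := by
    intro y hy
    rw [Finset.prod_ite]
    simp only [prod_const, one_pow, mul_one]
    have h3 := Finset.card_filter_add_card_filter_not (s := (univ : Finset (Fin D))) (fun i => x i = y i)
    simp only [card_univ, Fintype.card_fin] at h3
    have h64 : ∀ m : ℕ, 64 ^ m = 8 ^ (2 * m) := fun m => by rw [pow_mul]; norm_num
    rw [h64]
    apply Nat.pow_le_pow_right (by norm_num)
    simp only [ne_eq] at hy
    omega
  have h3 : (univ.filter (fun y : Fin D → Fin 64 =>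
      2 * (univ.filter (fun i => x i ≠ y i)).card < D)).card * 8 ^ D ≤ 128 ^ D := by
    calc _ = ∑ y ∈ (univ.filter (fun y : Fin D → Fin 64 =>
      2 * (univ.filter (fun i => x i ≠ y i)).card < D)), 8 ^ D := by simp
      _ ≤ ∑ y ∈ (univ.filter (fun y : Fin D → Fin 64 =>
      2 * (univ.filter (fun i => x i ≠ y i)).card < D)),
          ∏ i, (if x i = y i then 64 else 1 : ℕ) := by
          apply Finset.sum_le_sum
          intro y hy
          exact h2 y (mem_filter.1 hy).2
      _ ≤ ∑ y : Fin D → Fin 64, ∏ i, (if x i = y i then 64 else 1 : ℕ) :=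
          Finset.sum_le_sum_of_subset (Finset.filter_subset _ _)
      _ ≤ 128 ^ D := by rw [h1]; exact Nat.pow_le_pow_left (by norm_num) D
  have h4 : (128 : ℕ) ^ D = 16 ^ D * 8 ^ D := by rw [← mul_pow]; norm_num
  rw [h4] at h3
  exact Nat.le_of_mul_le_mul_right h3 (by positivity)

open Finset in
lemma rld_code (D : ℕ) : ∀ N : ℕ, N ≤ 4 ^ D → ∃ S : Finset (Fin D → Fin 64), S.card = N ∧
    ∀ x ∈ S, ∀ y ∈ S, x ≠ y → D ≤ 2 * (univ.filter (fun i => x i ≠ y i)).card := by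
  classical
  intro N
  induction N with
  | zero => intro _; exact ⟨∅, by simp⟩
  | succ N ih =>
    intro hN
    obtain ⟨S, hS, hd⟩ := ih (by omega)
    have hcard : (S.biUnion (fun x => univ.filter (fun y : Fin D → Fin 64 =>
        2 * (univ.filter (fun i => x i ≠ y i)).card < D))).card <
        (univ : Finset (Fin D → Fin 64)).card := by
      calc _ ≤ S.card * 16 ^ D := Finset.card_biUnion_le_card_mul _ _ _ (fun x _ => rld_ball D x)
        _ < 4 ^ D * 16 ^ D := by
          rw [hS]
          exact Nat.mul_lt_mul_of_pos_right (by omega) (by positivity)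
        _ = _ := by rw [← mul_pow]; simp
    obtain ⟨z, _, hz⟩ := Finset.exists_mem_notMem_of_card_lt_card hcard
    simp only [mem_biUnion, mem_filter, mem_univ, true_and, not_exists, not_and, not_lt] at hz
    by_cases hzS : z ∈ S
    · have h0 := hz z hzS
      have hD : D = 0 := by simpa using h0
      subst hD
      simp at hN
      subst hN
      exact ⟨{z}, by simp⟩
    · refine ⟨insert z S, by rw [card_insert_of_notMem hzS, hS], ?_⟩
      intro x hx y hy hxy
      rcases mem_insert.1 hx with hx1 | hx1
      · rcases mem_insert.1 hy with hy1 | hy1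
        · exact absurd (hx1.trans hy1.symm) hxy
        · have := hz y hy1
          rw [hx1]
          simpa only [ne_comm] using this
      · rcases mem_insert.1 hy with hy1 | hy1
        · rw [hy1]; exact hz x hx1
        · exact hd x hx1 y hy1 hxy

lemma rld_geom (l : ℕ) : ∑ j ∈ Finset.range l, (63 : ℝ) * 128 ^ (j + 1) ≤ 128 ^ (l + 1) / 2 := by
  induction l with
  | zero => norm_num
  | succ l ih =>
    rw [Finset.sum_range_succ]
    have : (0 : ℝ) < 128 ^ (l + 1) := by positivity
    rw [pow_succ _ (l + 1)]
    linarith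

open Finset in
lemma rld_embed {X : Type} [DecidableEq X] [Nonempty X] (Y : Finset X) (lev : X → X → ℕ) (J D : ℕ)
    (hJ : ∀ x ∈ Y, ∀ y ∈ Y, lev x y ≤ J) (h0 : ∀ x ∈ Y, lev x x = 0)
    (hs : ∀ x ∈ Y, ∀ y ∈ Y, lev x y = lev y x)
    (ht : ∀ x ∈ Y, ∀ y ∈ Y, ∀ z ∈ Y, lev x z ≤ max (lev x y) (lev y z))
    (hp : ∀ x ∈ Y, ∀ y ∈ Y, x ≠ y → 0 < lev x y)
    (hY : Y.card ≤ 4 ^ D) :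
    ∃ f : X → Fin D → ℝ, ∀ x ∈ Y, ∀ y ∈ Y, x ≠ y →
      (∀ i, |f x i - f y i| ≤ 64 * 128 ^ lev x y) ∧
      D ≤ 2 * (univ.filter (fun i => (128 : ℝ) ^ lev x y / 2 ≤ |f x i - f y i|)).card := by
  classical
  obtain ⟨S, hS, hSd⟩ := rld_code D Y.card hY
  let e := Finset.equivOfCardEq hS.symm
  let code : X → Fin D → Fin 64 := fun x => if h : x ∈ Y then (e ⟨x, h⟩ : Fin D → Fin 64) else 0
  have hcode : ∀ x ∈ Y, ∀ y ∈ Y, x ≠ y →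
      D ≤ 2 * (univ.filter (fun i => code x i ≠ code y i)).card := by
    intro x hx y hy hxy
    simp only [code, hx, hy, dif_pos]
    apply hSd _ (e ⟨x, hx⟩).2 _ (e ⟨y, hy⟩).2
    intro h
    have := e.injective (Subtype.ext h)
    exact hxy (congrArg Subtype.val this)
  let pick : Finset X → X := fun S => if h : S.Nonempty then h.choose else Classical.arbitrary X
  have hpick : ∀ S : Finset X, S.Nonempty → pick S ∈ S := by
    intro S h
    simp only [pick, h, dif_pos]
    exact h.choose_spec
  let r : ℕ → X → X := fun j x => pick (Y.filter (fun y => lev x y ≤ j))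
  have hr : ∀ j, ∀ x ∈ Y, r j x ∈ Y ∧ lev x (r j x) ≤ j := by
    intro j x hx
    have := hpick (Y.filter (fun y => lev x y ≤ j))
      ⟨x, mem_filter.2 ⟨hx, by rw [h0 x hx]; exact Nat.zero_le _⟩⟩
    exact mem_filter.1 this
  have hreq : ∀ j, ∀ x ∈ Y, ∀ y ∈ Y, lev x y ≤ j → r j x = r j y := by
    intro j x hx y hy hxy
    simp only [r]
    congr 1
    apply Finset.filter_congr
    intro z hz
    constructor
    · intro h
      have h1 := ht y hy x hx z hz
      have h2 := hs x hx y hy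
      omega
    · intro h
      have h1 := ht x hx y hy z hz
      omega
  have hrne : ∀ j, ∀ x ∈ Y, ∀ y ∈ Y, j < lev x y → r j x ≠ r j y := by
    intro j x hx y hy hxy h
    obtain ⟨h1, h2⟩ := hr j x hx
    obtain ⟨h3, h4⟩ := hr j y hy
    rw [← h] at h4
    have h5 := ht x hx _ h1 y hy
    have h6 := hs y hy _ h1
    omega
  refine ⟨fun x i => ∑ j ∈ range J, (128 : ℝ) ^ (j + 1) * ((code (r j x) i : ℕ) : ℝ), ?_⟩
  intro x hx y hy hxy
  obtain ⟨l, hl⟩ : ∃ l, lev x y = l + 1 := ⟨lev x y - 1, by have := hp x hx y hy hxy; omega⟩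
  have hlJ := hJ x hx y hy
  have hdiff : ∀ i, (∑ j ∈ range J, (128 : ℝ) ^ (j + 1) * ((code (r j x) i : ℕ) : ℝ)) -
      (∑ j ∈ range J, (128 : ℝ) ^ (j + 1) * ((code (r j y) i : ℕ) : ℝ)) =
      (∑ j ∈ range l, (128 : ℝ) ^ (j + 1) * (((code (r j x) i : ℕ) : ℝ) - ((code (r j y) i : ℕ) : ℝ)))
      + 128 ^ (l + 1) * (((code (r l x) i : ℕ) : ℝ) - ((code (r l y) i : ℕ) : ℝ)) := by
    intro i
    rw [← Finset.sum_range_succ (fun j => (128 : ℝ) ^ (j + 1) *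
      (((code (r j x) i : ℕ) : ℝ) - ((code (r j y) i : ℕ) : ℝ))), ← Finset.sum_sub_distrib]
    symm
    simp only [← mul_sub]
    apply Finset.sum_subset
    · intro j hj
      simp only [mem_range] at hj ⊢
      omega
    · intro j _ hj
      rw [hreq j x hx y hy (by simp only [mem_range] at hj; omega)]
      simp
  have hb : ∀ a b : Fin 64, |((a : ℕ) : ℝ) - ((b : ℕ) : ℝ)| ≤ 63 := by
    intro a b
    have ha : ((a : ℕ) : ℝ) ≤ 63 := by exact_mod_cast Nat.le_of_lt_succ a.2
    have hb : ((b : ℕ) : ℝ) ≤ 63 := by exact_mod_cast Nat.le_of_lt_succ b.2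
    have ha' : (0 : ℝ) ≤ ((a : ℕ) : ℝ) := by positivity
    have hb' : (0 : ℝ) ≤ ((b : ℕ) : ℝ) := by positivity
    rw [abs_le]; constructor <;> linarith
  have hlow : ∀ i, |∑ j ∈ range l, (128 : ℝ) ^ (j + 1) *
      (((code (r j x) i : ℕ) : ℝ) - ((code (r j y) i : ℕ) : ℝ))| ≤ 128 ^ (l + 1) / 2 := by
    intro i
    refine le_trans (Finset.abs_sum_le_sum_abs _ _) (le_trans ?_ (rld_geom l))
    apply Finset.sum_le_sum
    intro j _
    rw [abs_mul, abs_of_pos (by positivity : (0 : ℝ) < 128 ^ (j + 1)), mul_comm]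
    exact mul_le_mul_of_nonneg_right (hb _ _) (by positivity)
  have hP : (0 : ℝ) < 128 ^ (l + 1) := by positivity
  constructor
  · intro i
    simp only [hdiff i, hl]
    refine le_trans (abs_add_le _ _) ?_
    rw [abs_mul, abs_of_pos hP]
    have h1 := hlow i
    have h2 := mul_le_mul_of_nonneg_left (hb (code (r l x) i) (code (r l y) i)) hP.le
    linarith
  · refine le_trans (hcode _ (hr l x hx).1 _ (hr l y hy).1 (hrne l x hx y hy (by omega))) ?_
    apply Nat.mul_le_mul_left
    apply Finset.card_le_card
    intro i hi
    simp only [mem_filter, mem_univ, true_and] at hi ⊢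
    rw [hdiff i, hl]
    have h1 : (1 : ℝ) ≤ |((code (r l x) i : ℕ) : ℝ) - ((code (r l y) i : ℕ) : ℝ)| := by
      have h3 : ((code (r l x) i : ℕ) : ℤ) - ((code (r l y) i : ℕ) : ℤ) ≠ 0 := by
        intro h
        apply hi
        apply Fin.ext
        omega
      have := Int.one_le_abs h3
      exact_mod_cast this
    have h2 := hlow i
    have h3 := mul_le_mul_of_nonneg_left h1 hP.le
    have h4 : |(128 : ℝ) ^ (l + 1) * (((code (r l x) i : ℕ) : ℝ) - ((code (r l y) i : ℕ) : ℝ))| =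
      128 ^ (l + 1) * |((code (r l x) i : ℕ) : ℝ) - ((code (r l y) i : ℕ) : ℝ)| := by
      rw [abs_mul, abs_of_pos hP]
    rw [← h4] at h3
    rw [add_comm (∑ j ∈ range l, _)]
    have h5 := abs_sub_abs_le_abs_add ((128 : ℝ) ^ (l + 1) * (((code (r l x) i : ℕ) : ℝ) - ((code (r l y) i : ℕ) : ℝ)))
      (∑ j ∈ range l, (128 : ℝ) ^ (j + 1) *
      (((code (r j x) i : ℕ) : ℝ) - ((code (r j y) i : ℕ) : ℝ)))
    linarith

open Finset in
lemma rld_norm (D : ℕ) (hD : 1 ≤ D) (p : ℝ) (hp : 1 ≤ p) (v : Fin D → ℝ) (L U : ℝ) (hL : 0 ≤ L)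
    (hU : ∀ i, |v i| ≤ U) (hl : D ≤ 2 * (univ.filter (fun i => L ≤ |v i|)).card) :
    L / 2 * (D : ℝ) ^ (1 / p) ≤ (∑ i, |v i| ^ p) ^ (1 / p) ∧
    (∑ i, |v i| ^ p) ^ (1 / p) ≤ U * (D : ℝ) ^ (1 / p) := by
  have hp0 : 0 < p := by linarith
  have hU0 : 0 ≤ U := le_trans (abs_nonneg _) (hU ⟨0, hD⟩)
  have hD0 : (0 : ℝ) ≤ D := by positivity
  have key : ∀ a : ℝ, 0 ≤ a → (a ^ p * D) ^ (1 / p) = a * (D : ℝ) ^ (1 / p) := by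
    intro a ha
    rw [Real.mul_rpow (by positivity) hD0, ← Real.rpow_mul ha, mul_one_div_cancel hp0.ne',
      Real.rpow_one]
  constructor
  · rw [← key _ (by positivity)]
    apply Real.rpow_le_rpow (by positivity) _ (by positivity)
    have h1 : (D : ℝ) ≤ 2 * ((univ.filter (fun i => L ≤ |v i|)).card : ℝ) := by exact_mod_cast hl
    have h2 : (L / 2) ^ p ≤ L ^ p / 2 := by
      rw [Real.div_rpow hL (by norm_num)]
      apply div_le_div_of_nonneg_left (by positivity) (by norm_num)
      calc (2 : ℝ) = 2 ^ (1 : ℝ) := by simp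
        _ ≤ 2 ^ p := Real.rpow_le_rpow_of_exponent_le (by norm_num) hp
    have hLp : 0 ≤ L ^ p := by positivity
    calc (L / 2) ^ p * D ≤ L ^ p / 2 * (2 * ((univ.filter (fun i => L ≤ |v i|)).card : ℝ)) := by
          gcongr
      _ = ∑ i ∈ univ.filter (fun i => L ≤ |v i|), L ^ p := by simp; ring
      _ ≤ ∑ i ∈ univ.filter (fun i => L ≤ |v i|), |v i| ^ p := by
          apply Finset.sum_le_sum
          intro i hi
          exact Real.rpow_le_rpow hL (mem_filter.1 hi).2 hp0.le
      _ ≤ _ := Finset.sum_le_sum_of_subset_of_nonneg (Finset.filter_subset _ _)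
          (fun i _ _ => by positivity)
  · rw [← key _ hU0]
    apply Real.rpow_le_rpow (by positivity) _ (by positivity)
    calc ∑ i, |v i| ^ p ≤ ∑ i : Fin D, U ^ p :=
          Finset.sum_le_sum (fun i _ => Real.rpow_le_rpow (abs_nonneg _) (hU i) hp0.le)
      _ = U ^ p * D := by simp; ring

lemma rld_pigeon (t : ℕ) (ht : 0 < t) (b : ℕ → ℝ) (hb : ∀ i, 0 < b i) :
    ∃ i < t, b (i + 1) ≤ b i * (b t / b 0) ^ (1 / (t : ℝ)) := by
  by_contra hcon
  push Not at hcon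
  have hq : 0 < (b t / b 0) ^ (1 / (t : ℝ)) := Real.rpow_pos_of_pos (div_pos (hb _) (hb _)) _
  set q := (b t / b 0) ^ (1 / (t : ℝ)) with hqdef
  have h1 : ∀ i, i ≤ t → b 0 * q ^ i ≤ b i ∧ (0 < i → b 0 * q ^ i < b i) := by
    intro i
    induction i with
    | zero => simp
    | succ i ih =>
      intro hi
      have h2 := hcon i (by omega)
      have h3 := (ih (by omega)).1
      have h4 : b 0 * q ^ (i + 1) < b (i + 1) := by
        calc b 0 * q ^ (i + 1) = b 0 * q ^ i * q := by ring
          _ ≤ b i * q := mul_le_mul_of_nonneg_right h3 hq.le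
          _ < _ := h2
      exact ⟨h4.le, fun _ => h4⟩
  have h2 := (h1 t le_rfl).2 ht
  have h3 : q ^ t = b t / b 0 := by
    rw [hqdef, ← Real.rpow_natCast, ← Real.rpow_mul (div_pos (hb _) (hb _)).le,
      one_div_mul_cancel (by positivity), Real.rpow_one]
  rw [h3, mul_div_cancel₀ _ (hb 0).ne'] at h2
  exact lt_irrefl _ h2

set_option maxHeartbeats 1000000 in
open Finset in
lemma rld_ramsey {X : Type} [MetricSpace X] [DecidableEq X] (t : ℕ) (ht : 0 < t) (δ : ℝ)
    (hδ : 0 < δ) (hmin : ∀ x y : X, x ≠ y → δ < dist x y) : ∀ J n : ℕ, ∀ Z : Finset X,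
    Z.card ≤ n → (∀ x ∈ Z, ∀ y ∈ Z, dist x y ≤ δ * 128 ^ J) → ∀ M : ℝ, 1 ≤ M →
    (∀ x ∈ Z, ((Z.filter (fun y => dist x y ≤ δ * 128 ^ J / 256)).card : ℝ) ≤ M) →
    ∃ Y ⊆ Z, ∃ lev : X → X → ℕ, (Z.card : ℝ) ≤ Y.card * M ^ (1 / (t : ℝ)) ∧
      (∀ x ∈ Y, ∀ y ∈ Y, lev x y ≤ J) ∧ (∀ x ∈ Y, lev x x = 0) ∧
      (∀ x ∈ Y, ∀ y ∈ Y, lev x y = lev y x) ∧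
      (∀ x ∈ Y, ∀ y ∈ Y, ∀ z ∈ Y, lev x z ≤ max (lev x y) (lev y z)) ∧
      (∀ x ∈ Y, ∀ y ∈ Y, x ≠ y → 0 < lev x y ∧ dist x y ≤ δ * 128 ^ lev x y ∧
        δ * 128 ^ lev x y ≤ 512 * t * dist x y) := by
  intro J
  induction J with
  | zero =>
    intro n Z _ hdiam M hM _
    refine ⟨Z, Subset.refl _, fun _ _ => 0, ?_, by simp, by simp, by simp, by simp, ?_⟩
    · have : (1 : ℝ) ≤ M ^ (1 / (t : ℝ)) := Real.one_le_rpow hM (by positivity)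
      have h2 : (0 : ℝ) ≤ Z.card := by positivity
      nlinarith
    · intro x hx y hy hxy
      have := hdiam x hx y hy
      have := hmin x y hxy
      simp at *
      linarith
  | succ J ihJ =>
    intro n
    induction n with
    | zero =>
      intro Z hZ _ M hM _
      have hZ0 : Z = ∅ := by simpa using hZ
      subst hZ0
      exact ⟨∅, Subset.refl _, fun _ _ => 0, by simp⟩
    | succ n ihn =>
      intro Z hZ hdiam M hM hball
      rcases Z.eq_empty_or_nonempty with hZ0 | hne
      · subst hZ0
        exact ⟨∅, Subset.refl _, fun _ _ => 0, by simp⟩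
      obtain ⟨x, hx, hmax⟩ := Finset.exists_max_image Z
        (fun x => (Z.filter (fun y => dist x y ≤ δ * 128 ^ J / 256)).card) hne
      have htR : (0 : ℝ) < t := by exact_mod_cast ht
      have hK : 0 < δ * 128 ^ J := by positivity
      set K := δ * 128 ^ J with hKdef
      have hK1 : δ * 128 ^ (J + 1) = 128 * K := by rw [hKdef]; ring
      let rad : ℕ → ℝ := fun i => K / 256 + i * (127 * K / (256 * t))
      let B : ℕ → Finset X := fun i => Z.filter (fun y => dist x y ≤ rad i)
      have hrad0 : rad 0 = K / 256 := by simp [rad]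
      have hradt : rad t = 128 * K / 256 := by simp only [rad]; field_simp; ring
      have hxB : ∀ i, x ∈ B i := by
        intro i
        simp only [B, mem_filter, dist_self]
        exact ⟨hx, by positivity⟩
      obtain ⟨i, hit, hi⟩ := rld_pigeon t ht (fun i => ((B i).card : ℝ))
        (fun i => by exact_mod_cast Finset.card_pos.2 ⟨x, hxB i⟩)
      have hradmono : ∀ a b : ℕ, a ≤ b → rad a ≤ rad b := by
        intro a b hab
        have : (a : ℝ) ≤ b := by exact_mod_cast hab
        simp only [rad]
        gcongr
      have hstep : rad (i + 1) = rad i + 127 * K / (256 * t) := by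
        simp only [rad]; push_cast; ring
      set C := B i with hC
      set W := Z.filter (fun y => ¬ dist x y ≤ rad (i + 1)) with hWdef
      have hCZ : C ⊆ Z := Finset.filter_subset _ _
      have hWZ : W ⊆ Z := Finset.filter_subset _ _
      have hb0 : (1 : ℝ) ≤ (B 0).card := by exact_mod_cast Finset.card_pos.2 ⟨x, hxB 0⟩
      obtain ⟨Y1, hY1, lev1, h1c, h1J, h10, h1s, h1t, h1p⟩ := ihJ C.card C le_rfl (by
        intro a ha b hb
        have h1 := (mem_filter.1 ha).2
        have h2 := (mem_filter.1 hb).2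
        have h3 := hradmono i t hit.le
        have h4 := dist_triangle_left a b x
        linarith) (B 0).card hb0 (by
        intro y hy
        have h1 := hmax y (hCZ hy)
        have h2 : (C.filter (fun z => dist y z ≤ K / 256)).card ≤
          (Z.filter (fun z => dist y z ≤ K / 256)).card :=
          Finset.card_le_card (Finset.filter_subset_filter _ hCZ)
        have h3 : B 0 = Z.filter (fun y => dist x y ≤ K / 256) := by
          simp only [B, hrad0]
        rw [h3]
        exact_mod_cast h2.trans h1)
      have hcardsum : (B (i + 1)).card + W.card = Z.card :=
        Finset.card_filter_add_card_filter_not (s := Z) (fun y => dist x y ≤ rad (i + 1))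
      have hBpos : 0 < (B (i + 1)).card := Finset.card_pos.2 ⟨x, hxB _⟩
      obtain ⟨Y2, hY2, lev2, h2c, h2J, h20, h2s, h2t, h2p⟩ := ihn W (by omega)
        (fun a ha b hb => hdiam a (hWZ ha) b (hWZ hb)) M hM (by
        intro y hy
        refine le_trans ?_ (hball y (hWZ hy))
        exact_mod_cast Finset.card_le_card (Finset.filter_subset_filter _ hWZ))
      have hdisj : ∀ a, a ∈ C → a ∈ W → False := by
        intro a h1 h2
        exact (mem_filter.1 h2).2 ((mem_filter.1 h1).2.trans (hradmono i (i + 1) (by omega)))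
      have hcross : ∀ a ∈ C, ∀ b ∈ W, dist a b ≤ δ * 128 ^ (J + 1) ∧
          δ * 128 ^ (J + 1) ≤ 512 * t * dist a b := by
        intro a ha b hb
        refine ⟨hdiam a (hCZ ha) b (hWZ hb), ?_⟩
        have h1 := (mem_filter.1 ha).2
        have h2 := (mem_filter.1 hb).2
        push Not at h2
        have h3 := dist_triangle x a b
        have h4 : 127 * K / (256 * t) ≤ dist a b := by linarith
        rw [div_le_iff₀ (by positivity)] at h4
        rw [hK1]
        linarith
      have hYd : Disjoint Y1 Y2 := by
        rw [Finset.disjoint_left]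
        intro a h1 h2
        exact hdisj a (hY1 h1) (hY2 h2)
      have n12 : ∀ a ∈ Y1, a ∉ Y2 := fun a h1 h2 => hdisj a (hY1 h1) (hY2 h2)
      have n21 : ∀ a ∈ Y2, a ∉ Y1 := fun a h1 h2 => hdisj a (hY1 h2) (hY2 h1)
      refine ⟨Y1 ∪ Y2, Finset.union_subset (hY1.trans hCZ) (hY2.trans hWZ),
        fun a b => if a ∈ Y1 ∧ b ∈ Y1 then lev1 a b else if a ∈ Y2 ∧ b ∈ Y2 then lev2 a b
          else J + 1, ?_, ?_, ?_, ?_, ?_, ?_⟩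
      · rw [Finset.card_union_of_disjoint hYd]
        have hbt : ((B t).card : ℝ) ≤ M := by
          have := hball x hx
          rw [hK1, ← hradt] at this
          exact this
        have e1 : ((B (i + 1)).card : ℝ) ≤ Y1.card * M ^ (1 / (t : ℝ)) := by
          calc ((B (i + 1)).card : ℝ) ≤ C.card * (((B t).card : ℝ) / (B 0).card) ^ (1 / (t : ℝ)) := hi
            _ ≤ (Y1.card * ((B 0).card : ℝ) ^ (1 / (t : ℝ))) *
                (((B t).card : ℝ) / (B 0).card) ^ (1 / (t : ℝ)) := by gcongr
            _ = Y1.card * ((B t).card : ℝ) ^ (1 / (t : ℝ)) := by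
                rw [mul_assoc, ← Real.mul_rpow (by positivity) (by positivity),
                  mul_div_cancel₀ _ (by linarith)]
            _ ≤ _ := by gcongr
        have e2 : (Z.card : ℝ) = (B (i + 1)).card + W.card := by exact_mod_cast hcardsum.symm
        push_cast
        rw [e2]
        linarith
      · intro a ha b hb
        rcases mem_union.1 ha with ha | ha <;> rcases mem_union.1 hb with hb | hb
        · simp [ha, hb]
          have := h1J a ha b hb
          omega
        · simp [ha, hb, n12, n21]
        · simp [ha, hb, n12, n21]
        · simpa [ha, hb, n21] using h2J a ha b hb
      · intro a ha
        rcases mem_union.1 ha with ha | ha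
        · simpa [ha] using h10 a ha
        · simpa [ha, n21] using h20 a ha
      · intro a ha b hb
        rcases mem_union.1 ha with ha | ha <;> rcases mem_union.1 hb with hb | hb
        · simpa [ha, hb] using h1s a ha b hb
        · simp [ha, hb, n12, n21]
        · simp [ha, hb, n12, n21]
        · simpa [ha, hb, n21] using h2s a ha b hb
      · intro a ha b hb c hc
        have j1 := h1J
        have j2 := h2J
        rcases mem_union.1 ha with ha | ha <;> rcases mem_union.1 hb with hb | hb <;>
          rcases mem_union.1 hc with hc | hc
        · simpa [ha, hb, hc] using h1t a ha b hb c hc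
        · simp [ha, hb, hc, n12, n21]
        · simp [ha, hb, hc, n12, n21]
          have := h1J a ha c hc; omega
        · simp [ha, hb, hc, n12, n21]
        · simp [ha, hb, hc, n12, n21]
        · simp [ha, hb, hc, n12, n21]
          exact h2J a ha c hc
        · simp [ha, hb, hc, n12, n21]
        · simpa [ha, hb, hc, n21] using h2t a ha b hb c hc
      · intro a ha b hb hab
        rcases mem_union.1 ha with ha | ha <;> rcases mem_union.1 hb with hb | hb
        · simpa [ha, hb] using h1p a ha b hb hab
        · simpa [ha, hb, n12, n21] using hcross a (hY1 ha) b (hY2 hb)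
        · have := hcross b (hY1 hb) a (hY2 ha)
          rw [dist_comm] at this
          simpa [ha, hb, n12, n21] using this
        · simpa [ha, hb, n21] using h2p a ha b hb hab

lemma rld_min (X : Type) [MetricSpace X] [Fintype X] :
    ∃ δ : ℝ, 0 < δ ∧ ∀ x y : X, x ≠ y → δ < dist x y := by
  classical
  by_cases h : (Finset.univ.filter (fun q : X × X => q.1 ≠ q.2)).Nonempty
  · obtain ⟨q, hq, hm⟩ := Finset.exists_min_image _ (fun q : X × X => dist q.1 q.2) h
    have hq' : q.1 ≠ q.2 := by simpa using hq
    have hpos := dist_pos.2 hq'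
    refine ⟨dist q.1 q.2 / 2, by linarith, ?_⟩
    intro x y hxy
    have := hm (x, y) (by simpa using hxy)
    simp only at this
    linarith
  · refine ⟨1, one_pos, ?_⟩
    intro x y hxy
    exact absurd ⟨(x, y), by simpa using hxy⟩ h

/-- The full Ramsey statement with an `α`-embedding in dimension `D`. -/
lemma rld_main (X : Type) [MetricSpace X] [Fintype X] (hX : 2 ≤ Fintype.card X) (p α ψ : ℝ)
    (hp : 1 ≤ p) (t D : ℕ) (ht : 0 < t) (htα : 131072 * (t : ℝ) ≤ α) (hψ : ψ ≤ 1 - 1 / t)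
    (hD : 1 ≤ D) (hDψ : (Fintype.card X : ℝ) ^ ψ ≤ 4 ^ D) :
    ∃ Y : Finset X, (Fintype.card X : ℝ) ^ ψ ≤ (Y.card : ℝ) ∧
      ∃ f : X → (Fin D → ℝ), ∃ s : ℝ, 0 < s ∧ ∀ x ∈ Y, ∀ y ∈ Y,
        s * dist x y ≤ (∑ i, |f x i - f y i| ^ p) ^ (1 / p) ∧
        (∑ i, |f x i - f y i| ^ p) ^ (1 / p) ≤ α * s * dist x y := by
  classical
  have : Nonempty X := Fintype.card_pos_iff.1 (by omega)
  obtain ⟨δ, hδ, hmin⟩ := rld_min X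
  have hn1 : (1 : ℝ) ≤ Fintype.card X := by exact_mod_cast (by omega : 1 ≤ Fintype.card X)
  have hn0 : (0 : ℝ) < Fintype.card X := by linarith
  have htR : (0 : ℝ) < t := by exact_mod_cast ht
  obtain ⟨J, hJ⟩ : ∃ J : ℕ, ∀ x y : X, dist x y ≤ δ * 128 ^ J := by
    obtain ⟨q, hq⟩ := Finite.exists_max (fun q : X × X => dist q.1 q.2)
    obtain ⟨J, hJ⟩ := pow_unbounded_of_one_lt (dist q.1 q.2 / δ) (by norm_num : (1 : ℝ) < 128)
    refine ⟨J, fun x y => (hq (x, y)).trans ?_⟩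
    rw [div_lt_iff₀ hδ] at hJ
    linarith
  obtain ⟨Y0, -, lev, hc, hlJ, hl0, hls, hlt, hlp⟩ := rld_ramsey t ht δ hδ hmin J
    (Finset.univ : Finset X).card Finset.univ le_rfl (fun x _ y _ => hJ x y) (Fintype.card X) hn1
    (by intro x _; exact_mod_cast Finset.card_le_univ _)
  have hY0 : (Fintype.card X : ℝ) ^ ψ ≤ Y0.card := by
    calc (Fintype.card X : ℝ) ^ ψ ≤ (Fintype.card X : ℝ) ^ (1 - 1 / (t : ℝ)) :=
          Real.rpow_le_rpow_of_exponent_le hn1 hψ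
      _ = (Fintype.card X : ℝ) / (Fintype.card X : ℝ) ^ (1 / (t : ℝ)) := by
          rw [Real.rpow_sub hn0, Real.rpow_one]
      _ ≤ Y0.card := by
          rw [div_le_iff₀ (by positivity)]
          simpa using hc
  obtain ⟨Y, hYY, hYc⟩ := Finset.exists_subset_card_eq (Nat.ceil_le.2 hY0)
  have hY4 : Y.card ≤ 4 ^ D := by
    rw [hYc]
    apply Nat.ceil_le.2
    exact_mod_cast hDψ
  obtain ⟨f, hf⟩ := rld_embed Y lev J D (fun x hx y hy => hlJ x (hYY hx) y (hYY hy))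
    (fun x hx => hl0 x (hYY hx)) (fun x hx y hy => hls x (hYY hx) y (hYY hy))
    (fun x hx y hy z hz => hlt x (hYY hx) y (hYY hy) z (hYY hz))
    (fun x hx y hy hxy => (hlp x (hYY hx) y (hYY hy) hxy).1) hY4
  refine ⟨Y, by rw [hYc]; exact Nat.le_ceil _, f, (D : ℝ) ^ (1 / p) / (4 * δ), ?_, ?_⟩
  · have : (0 : ℝ) < D := by exact_mod_cast hD
    positivity
  intro x hx y hy
  by_cases hxy : x = y
  · subst hxy
    have hp0 : 0 < p := by linarith
    simp [Real.zero_rpow hp0.ne', Real.zero_rpow (inv_pos.2 hp0).ne']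
  obtain ⟨-, h1, h2⟩ := hlp x (hYY hx) y (hYY hy) hxy
  obtain ⟨g1, g2⟩ := hf x hx y hy hxy
  obtain ⟨n1, n2⟩ := rld_norm D hD p hp (fun i => f x i - f y i) _ _ (by positivity) g1 g2
  have hDp : (0 : ℝ) < (D : ℝ) ^ (1 / p) := by
    have : (0 : ℝ) < D := by exact_mod_cast hD
    positivity
  set q := (D : ℝ) ^ (1 / p)
  set P := (128 : ℝ) ^ lev x y
  constructor
  · refine le_trans ?_ n1
    rw [div_mul_eq_mul_div, div_le_iff₀ (by positivity)]
    nlinarith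
  · refine le_trans n2 ?_
    have h3 : 512 * t * dist x y * 256 ≤ α * dist x y := by
      have := mul_le_mul_of_nonneg_right htα (dist_nonneg : 0 ≤ dist x y)
      linarith
    have h4 : α * (q / (4 * δ)) * dist x y = q * (α * dist x y) / (4 * δ) := by ring
    rw [h4, le_div_iff₀ (by positivity)]
    have h5 : 256 * (δ * P) ≤ α * dist x y := by linarith
    have := mul_le_mul_of_nonneg_left h5 hDp.le
    linarith

lemma rld_two (X : Type) [MetricSpace X] [Fintype X] (hX : 2 ≤ Fintype.card X) (p α : ℝ)
    (hp : 1 ≤ p) (hα : 2 < α) (D : ℕ) (hD : 1 ≤ D) :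
    ∃ Y : Finset X, Y.card = 2 ∧
      ∃ f : X → (Fin D → ℝ), ∃ s : ℝ, 0 < s ∧ ∀ x ∈ Y, ∀ y ∈ Y,
        s * dist x y ≤ (∑ i, |f x i - f y i| ^ p) ^ (1 / p) ∧
        (∑ i, |f x i - f y i| ^ p) ^ (1 / p) ≤ α * s * dist x y := by
  classical
  obtain ⟨a, b, hab⟩ := Fintype.exists_pair_of_one_lt_card (by omega : 1 < Fintype.card X)
  have hDp : (0 : ℝ) < (D : ℝ) ^ (1 / p) := by
    have : (0 : ℝ) < D := by exact_mod_cast hD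
    positivity
  refine ⟨{a, b}, Finset.card_pair hab, fun x _ => if x = a then dist a b else 0,
    (D : ℝ) ^ (1 / p) / 2, by positivity, ?_⟩
  have hp0 : 0 < p := by linarith
  intro x hx y hy
  by_cases hxy : x = y
  · subst hxy
    simp [Real.zero_rpow hp0.ne', Real.zero_rpow (inv_pos.2 hp0).ne']
  have hv : |(if x = a then dist a b else 0) - (if y = a then dist a b else 0)| = dist x y := by
    simp only [Finset.mem_insert, Finset.mem_singleton] at hx hy
    rcases hx with rfl | rfl <;> rcases hy with rfl | rfl
    · exact absurd rfl hxy
    · simp [Ne.symm hab]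
    · simp [Ne.symm hab, dist_comm]
    · exact absurd rfl hxy
  obtain ⟨n1, n2⟩ := rld_norm D hD p hp
    (fun _ => (if x = a then dist a b else 0) - (if y = a then dist a b else 0))
    (dist x y) (dist x y) dist_nonneg (fun _ => hv.le) (by
      simp only [hv, le_refl, Finset.filter_true, Finset.card_univ, Fintype.card_fin]; omega)
  constructor
  · refine le_trans (le_of_eq ?_) n1
    ring
  · refine le_trans n2 ?_
    have : 0 ≤ (D : ℝ) ^ (1 / p) * dist x y := by positivity
    nlinarith

/-- Ramsey-type theorem with low dimension: every `n`-point metric space contains a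
subset of size `n^ψ`, with `ψ ≥ 1 - c·log α/α`, which `α`-embeds into `ℝ^D` with the
`ℓ_p` norm, where `D = ⌈⌈c'/(α-2)²⌉·ψ·log n⌉`. -/
theorem ramsey_low_dimension :
    ∃ c c' : ℝ, 0 < c ∧ 0 < c' ∧
      ∀ (p α : ℝ), 1 ≤ p → 2 < α →
        ∀ (X : Type) [MetricSpace X] [Fintype X], 2 ≤ Fintype.card X →
          ∃ ψ : ℝ, 0 < ψ ∧ ψ ≤ 1 ∧ 1 - c * Real.log α / α ≤ ψ ∧
            ∃ Y : Finset X,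
              (Fintype.card X : ℝ) ^ ψ ≤ (Y.card : ℝ) ∧
              ∃ f : X →
                  (Fin ⌈(⌈c' / (α - 2) ^ 2⌉₊ : ℝ) * ψ * Real.log (Fintype.card X)⌉₊ → ℝ),
                ∃ s : ℝ, 0 < s ∧
                  ∀ x ∈ Y, ∀ y ∈ Y,
                    s * dist x y ≤ (∑ i, |f x i - f y i| ^ p) ^ (1 / p) ∧
                    (∑ i, |f x i - f y i| ^ p) ^ (1 / p) ≤ α * s * dist x y := by
  refine ⟨524288, 1, by norm_num, by norm_num, ?_⟩
  intro p α hp hα X _ _ hX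
  have hn2 : (2 : ℝ) ≤ Fintype.card X := by exact_mod_cast hX
  have hlog : 0 < Real.log (Fintype.card X) := Real.log_pos (by linarith)
  have hM : (1 : ℝ) ≤ (⌈(1 : ℝ) / (α - 2) ^ 2⌉₊ : ℝ) := by
    have h1 : 0 < (1 : ℝ) / (α - 2) ^ 2 := by
      have : 0 < α - 2 := by linarith
      positivity
    exact_mod_cast Nat.ceil_pos.2 h1
  have hα0 : 0 < α := by linarith
  by_cases hc : 1 - 524288 * Real.log α / α ≤ 0
  · have hl2 : 0 < Real.log 2 := Real.log_pos (by norm_num)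
    have hψ : 0 < Real.log 2 / Real.log (Fintype.card X) := by positivity
    obtain ⟨Y, hY, hf⟩ := rld_two X hX p α hp hα
      ⌈(⌈(1 : ℝ) / (α - 2) ^ 2⌉₊ : ℝ) * (Real.log 2 / Real.log (Fintype.card X)) *
        Real.log (Fintype.card X)⌉₊ (Nat.ceil_pos.2 (by positivity))
    refine ⟨Real.log 2 / Real.log (Fintype.card X), hψ, ?_, hc.trans hψ.le, Y, ?_, hf⟩
    · rw [div_le_one hlog]
      exact Real.log_le_log (by norm_num) hn2
    · rw [hY, Real.rpow_def_of_pos (by linarith), mul_div_cancel₀ _ hlog.ne',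
        Real.exp_log (by norm_num)]
      norm_num
  · push Not at hc
    have hla : 1 / 2 < Real.log α := by
      have h1 := Real.log_two_gt_d9
      have h2 := Real.log_le_log (by norm_num) hα.le
      linarith
    have hbig : 262144 < α := by
      rw [sub_pos, div_lt_one hα0] at hc
      linarith
    have ht : 0 < ⌊α / 131072⌋₊ := Nat.floor_pos.2 (by rw [le_div_iff₀ (by norm_num)]; linarith)
    have ht1 : (⌊α / 131072⌋₊ : ℝ) ≤ α / 131072 := Nat.floor_le (by positivity)
    have ht2 : α / 131072 < (⌊α / 131072⌋₊ : ℝ) + 1 := Nat.lt_floor_add_one _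
    have ht3 : α / 262144 ≤ (⌊α / 131072⌋₊ : ℝ) := by linarith
    have hD := Nat.ceil_pos.2 (mul_pos (mul_pos (lt_of_lt_of_le one_pos hM) hc) hlog)
    obtain ⟨Y, hY, hf⟩ := rld_main X hX p α (1 - 524288 * Real.log α / α) hp ⌊α / 131072⌋₊ _ ht
      (by linarith) (by
        have h1 : 1 / (⌊α / 131072⌋₊ : ℝ) ≤ 1 / (α / 262144) :=
          one_div_le_one_div_of_le (by positivity) ht3
        have h2 : 1 / (α / 262144) ≤ 524288 * Real.log α / α := by
          rw [one_div_div]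
          apply div_le_div_of_nonneg_right _ hα0.le
          linarith
        linarith) hD (by
        have h1 := Nat.le_ceil ((⌈(1 : ℝ) / (α - 2) ^ 2⌉₊ : ℝ) *
          (1 - 524288 * Real.log α / α) * Real.log (Fintype.card X))
        set D := ⌈(⌈(1 : ℝ) / (α - 2) ^ 2⌉₊ : ℝ) *
          (1 - 524288 * Real.log α / α) * Real.log (Fintype.card X)⌉₊
        set ψ := 1 - 524288 * Real.log α / α
        have h2 : Real.log (Fintype.card X) * ψ ≤ D := by
          refine le_trans ?_ h1
          have : 0 ≤ ψ * Real.log (Fintype.card X) := by positivity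
          nlinarith
        rw [Real.rpow_def_of_pos (by linarith)]
        calc Real.exp (Real.log (Fintype.card X) * ψ) ≤ Real.exp D := Real.exp_le_exp.2 h2
          _ = Real.exp 1 ^ D := by rw [← Real.exp_nat_mul, mul_one]
          _ ≤ 4 ^ D := by
            apply pow_le_pow_left₀ (Real.exp_pos _).le
            have := Real.exp_one_lt_d9
            linarith)
    refine ⟨1 - 524288 * Real.log α / α, hc, ?_, le_rfl, Y, hY, hf⟩
    have : 0 ≤ 524288 * Real.log α / α := by positivity
    linarith
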